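/- Let R be a commutative noetherian ring, M a finitely generated d-torsionfree module with R ∈ add M, and X finitely generated with grade_R X > c, 0 ≤ c < d. With A = End_R(M ⊕ Ω^c X) and e the idempotent corresponding to M, the projective dimension of the left A-module A/AeA is at most gldim End_R(M). -/

import Mathlib

open CategoryTheory
universe u
noncomputable section

/-- A linear map factors through a projective module. -/
def FactorsThroughProjective {R : Type u} [Ring R] {M N : Type u}
    [AddCommGroup M] [AddCommGroup N] [Module R M] [Module R N] (f : M →ₗ[R] N) : Prop :=
  ∃ (P : Type u) (_ : AddCommGroup P) (_ : Module R P), Module.Projective R P ∧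
    ∃ (g : M →ₗ[R] P) (h : P →ₗ[R] N), h.comp g = f

/-- `Ext^i_R(X, Y) = 0`. -/
def extZero (R : Type u) [CommRing R] (i : ℕ) (X Y : ModuleCat.{u} R) : Prop :=
  Subsingleton (((Ext R (ModuleCat.{u} R) i).obj (Opposite.op X)).obj Y)

/-- `Y` is an `n`-th syzygy of `N` (via finitely generated projective modules). -/
def IsSyzygy (R : Type u) [CommRing R] : ℕ → ModuleCat.{u} R → ModuleCat.{u} R → Prop
  | 0, Y, N => Nonempty (Y ≅ N)
  | n+1, Y, N => ∃ (P K : ModuleCat.{u} R) (i : Y ⟶ P) (p : P ⟶ K),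
      Projective P ∧ Module.Finite R P ∧ Function.Injective i ∧ Function.Surjective p ∧
      Function.Exact i p ∧ IsSyzygy R n K N

/-- projective dimension at most `n` -/
def pdLE (A : Type u) [Ring A] : ℕ → ModuleCat.{u} A → Prop
  | 0, M => Projective M
  | n+1, M => Projective M ∨ ∃ (K P : ModuleCat.{u} A) (i : K ⟶ P) (p : P ⟶ M),
      Projective P ∧ Function.Injective i ∧ Function.Surjective p ∧
      Function.Exact i p ∧ pdLE A n K

/-- global dimension at most `n` -/
def gldimLE (A : Type u) [Ring A] (n : ℕ) : Prop := ∀ M : ModuleCat.{u} A, pdLE A n M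

/-- `M` is `d`-torsionfree: it is a `d`-th syzygy of a finitely generated module `N`
with `Ext^i(N,R) = 0` for `1 ≤ i ≤ d`. -/
def IsTorsionFree (R : Type u) [CommRing R] (d : ℕ) (M : ModuleCat.{u} R) : Prop :=
  ∃ N : ModuleCat.{u} R, Module.Finite R N ∧
    (∀ i, 1 ≤ i → i ≤ d → extZero R i N (ModuleCat.of R R)) ∧ IsSyzygy R d M N

/-- `N` lies in `add M`: it is a direct summand of a finite direct sum of copies of `M`. -/
def MemAdd (R : Type u) [CommRing R] (M N : ModuleCat.{u} R) : Prop :=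
  ∃ (k : ℕ) (i : N →ₗ[R] (Fin k → M)) (p : (Fin k → M) →ₗ[R] N), p.comp i = LinearMap.id

/-- The left `A`-module structure on the quotient of `A` by a two-sided ideal. -/
def quotSpanModule (A : Type u) [Ring A] (I : TwoSidedIdeal A) :
    Module A I.ringCon.Quotient :=
  Module.compHom _ I.ringCon.mk'

open Limits in
lemma exact_of_extZero {R : Type u} [CommRing R] {i : ℕ} {X Y : ModuleCat.{u} R}
    (h : extZero R i X Y) (P : ProjectiveResolution X) :
    (P.complex.linearYonedaObj R Y).ExactAt i := by
  rw [HomologicalComplex.exactAt_iff_isZero_homology]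
  refine IsZero.of_iso ?_ (P.isoExt (R := R) i Y).symm
  unfold extZero at h
  exact ModuleCat.isZero_of_subsingleton _

lemma hom_zero_of_extZero {R : Type u} [CommRing R] {X Y : ModuleCat.{u} R}
    (h : extZero R 0 X Y) (f : X ⟶ Y) : f = 0 := by
  obtain ⟨P⟩ := (inferInstance : HasProjectiveResolution X).out
  have h1 := exact_of_extZero h P
  rw [HomologicalComplex.exactAt_iff' _ ((ComplexShape.up ℕ).prev 0) 0 1 rfl (by simp),
    ShortComplex.moduleCat_exact_iff] at h1
  let g : P.complex.X 0 ⟶ X := P.π.f 0 ≫ (HomologicalComplex.singleObjXSelf _ 0 X).hom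
  have := h1 (g ≫ f) ?_
  · obtain ⟨x, hx⟩ := this
    have h0 : (P.complex.linearYonedaObj R Y).d ((ComplexShape.up ℕ).prev 0) 0 = 0 := by
      apply HomologicalComplex.shape
      simp
    have h2 : g ≫ f = 0 := by
      rw [← hx]
      change (P.complex.linearYonedaObj R Y).d ((ComplexShape.up ℕ).prev 0) 0 x = 0
      rw [h0]; rfl
    have : Epi g := epi_comp' inferInstance inferInstance
    exact (cancel_epi g).1 (by rw [h2, Limits.comp_zero])
  · change P.complex.d 1 0 ≫ (g ≫ f) = 0
    rw [← Category.assoc, ← Category.assoc, P.complex_d_comp_π_f_zero, Limits.zero_comp,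
      Limits.zero_comp]

lemma ext_of_extZero {R : Type u} [CommRing R] {i : ℕ} {X Y : ModuleCat.{u} R}
    (h : extZero R (i+1) X Y) : Subsingleton (Abelian.Ext X Y (i+1)) := by
  obtain ⟨P⟩ := (inferInstance : HasProjectiveResolution X).out
  have h1 := exact_of_extZero h P
  rw [HomologicalComplex.exactAt_iff' _ i (i+1) (i+2) (by simp) (by simp),
    ShortComplex.moduleCat_exact_iff] at h1
  refine subsingleton_of_forall_eq 0 fun α => ?_
  obtain ⟨f, hf, rfl⟩ := P.extMk_surjective α (i+2) rfl
  rw [P.extMk_eq_zero_iff _ _ _ _ i rfl]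
  exact h1 f hf

lemma mkSES {R : Type u} [Ring R] {A B C : ModuleCat.{u} R} (f : A ⟶ B) (g : B ⟶ C)
    (hf : Function.Injective f) (hg : Function.Surjective g) (h : Function.Exact f g) :
    ∃ w : f ≫ g = 0, (ShortComplex.mk f g w).ShortExact := by
  refine ⟨by ext x; exact h.apply_apply_eq_zero x, ?_⟩
  exact { exact := (ShortComplex.ShortExact.moduleCat_exact_iff_function_exact _).mpr h
          mono_f := (ModuleCat.mono_iff_injective _).2 hf
          epi_g := (ModuleCat.epi_iff_surjective _).2 hg }

lemma ext_shift {R : Type u} [CommRing R] {K P L Y : ModuleCat.{u} R} (f : K ⟶ P) (g : P ⟶ L)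
    (hf : Function.Injective f) (hg : Function.Surjective g) (h : Function.Exact f g)
    (hP : Projective P) (i : ℕ) (hL : Subsingleton (Abelian.Ext L Y (i+2))) :
    Subsingleton (Abelian.Ext K Y (i+1)) := by
  obtain ⟨w, hS⟩ := mkSES f g hf hg h
  refine subsingleton_of_forall_eq 0 fun α => ?_
  obtain ⟨β, rfl⟩ := Abelian.Ext.contravariant_sequence_exact₁ hS Y α
    (n₁ := i+2) (by lia) (hL.elim _ _)
  rw [Abelian.Ext.eq_zero_of_projective β, Abelian.Ext.comp_zero]

lemma ext_extend {R : Type u} [CommRing R] {K P L Y : ModuleCat.{u} R} (f : K ⟶ P) (g : P ⟶ L)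
    (hf : Function.Injective f) (hg : Function.Surjective g) (h : Function.Exact f g)
    (hL : Subsingleton (Abelian.Ext L Y 1)) (u : K ⟶ Y) : ∃ v : P ⟶ Y, f ≫ v = u := by
  obtain ⟨w, hS⟩ := mkSES f g hf hg h
  obtain ⟨β, hβ⟩ := Abelian.Ext.contravariant_sequence_exact₁ hS Y (Abelian.Ext.mk₀ u)
    (n₁ := 1) (by lia) (hL.elim _ _)
  obtain ⟨v, rfl⟩ := (Abelian.Ext.mk₀_bijective _ _).2 β
  rw [Abelian.Ext.mk₀_comp_mk₀] at hβ
  exact ⟨v, (Abelian.Ext.mk₀_bijective _ _).1 hβ⟩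

/-- pdLE agrees with Mathlib's notion. -/
lemma pdLE_iff {A : Type u} [Ring A] (n : ℕ) (M : ModuleCat.{u} A) :
    pdLE A n M ↔ HasProjectiveDimensionLT M (n+1) := by
  induction n generalizing M with
  | zero => exact projective_iff_hasProjectiveDimensionLT_one
  | succ n ih =>
    constructor
    · rintro (h | ⟨K, P, i, p, hP, hi, hp, he, hK⟩)
      · have : HasProjectiveDimensionLT M 1 := inferInstance
        exact hasProjectiveDimensionLT_of_ge M 1 _ (by lia)
      · obtain ⟨w, hS⟩ := mkSES i p hi hp he
        exact (hS.hasProjectiveDimensionLT_X₃_iff n hP).2 ((ih K).1 hK)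
    · intro h
      right
      let P := Projective.over M
      let p : P ⟶ M := Projective.π M
      have hp : Function.Surjective p := (ModuleCat.epi_iff_surjective _).1 inferInstance
      let K := ModuleCat.of A (LinearMap.ker p.hom)
      let i : K ⟶ P := ModuleCat.ofHom (LinearMap.ker p.hom).subtype
      have hi : Function.Injective i := Subtype.val_injective
      have he : Function.Exact i p := LinearMap.exact_subtype_ker_map p.hom
      refine ⟨K, P, i, p, inferInstance, hi, hp, he, (ih K).2 ?_⟩
      obtain ⟨w, hS⟩ := mkSES i p hi hp he
      exact (hS.hasProjectiveDimensionLT_X₃_iff n inferInstance).1 h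

lemma ext_syzygy {R : Type u} [CommRing R] {Y X : ModuleCat.{u} R} (n : ℕ) :
    ∀ (K : ModuleCat.{u} R), IsSyzygy R n K X → ∀ i,
      Subsingleton (Abelian.Ext X Y (i+1+n)) → Subsingleton (Abelian.Ext K Y (i+1)) := by
  induction n with
  | zero =>
    rintro K ⟨e⟩ i h
    refine subsingleton_of_forall_eq 0 fun α => ?_
    have h1 : (Abelian.Ext.mk₀ e.inv).comp α (zero_add (i+1)) = 0 := h.elim _ _
    calc α = (Abelian.Ext.mk₀ e.hom).comp ((Abelian.Ext.mk₀ e.inv).comp α (zero_add (i+1)))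
              (zero_add (i+1)) := by
            rw [Abelian.Ext.mk₀_comp_mk₀_assoc]; simp
      _ = 0 := by rw [h1, Abelian.Ext.comp_zero]
  | succ n ih =>
    rintro K ⟨P, L, f, g, hP, -, hf, hg, he, hL⟩ i h
    refine ext_shift f g hf hg he hP i (ih L hL (i+1) ?_)
    rwa [show i + 1 + 1 + n = i + 1 + (n + 1) by lia]

lemma fg_proj_retract {R : Type u} [CommRing R] (Q : Type u) [AddCommGroup Q] [Module R Q]
    [Module.Finite R Q] (hQ : Module.Projective R Q) :
    ∃ (n : ℕ) (i : Q →ₗ[R] (Fin n → R)) (p : (Fin n → R) →ₗ[R] Q), p.comp i = LinearMap.id := by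
  obtain ⟨n, p, hp⟩ := Module.Finite.exists_fin' R Q
  obtain ⟨i, hi⟩ := Module.projective_lifting_property p LinearMap.id hp
  exact ⟨n, i, p, hi⟩

lemma extend_fg_proj {R : Type u} [CommRing R] {K P Q : Type u} [AddCommGroup K] [AddCommGroup P]
    [AddCommGroup Q] [Module R K] [Module R P] [Module R Q] [Module.Finite R Q]
    (hQ : Module.Projective R Q) (f : K →ₗ[R] P)
    (h : ∀ u : K →ₗ[R] R, ∃ v : P →ₗ[R] R, v.comp f = u) (u : K →ₗ[R] Q) :
    ∃ v : P →ₗ[R] Q, v.comp f = u := by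
  obtain ⟨n, i, p, hpi⟩ := fg_proj_retract (R := R) Q hQ
  choose v hv using fun j => h ((LinearMap.proj j).comp (i.comp u))
  refine ⟨p.comp (LinearMap.pi v), ?_⟩
  ext x
  have : (LinearMap.pi v) (f x) = i (u x) := by
    ext j
    exact LinearMap.congr_fun (hv j) x
  simp only [LinearMap.comp_apply, this]
  exact LinearMap.congr_fun hpi _

lemma zero_fg_proj {R : Type u} [CommRing R] {K Q : Type u} [AddCommGroup K]
    [AddCommGroup Q] [Module R K] [Module R Q] [Module.Finite R Q]
    (hQ : Module.Projective R Q)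
    (h : ∀ u : K →ₗ[R] R, u = 0) (u : K →ₗ[R] Q) : u = 0 := by
  obtain ⟨n, i, p, hpi⟩ := fg_proj_retract (R := R) Q hQ
  have h0 : i.comp u = 0 := by
    ext x j
    exact LinearMap.congr_fun (h ((LinearMap.proj j).comp (i.comp u))) x
  rw [← LinearMap.id_comp u, ← hpi, LinearMap.comp_assoc, h0, LinearMap.comp_zero]

lemma syzygy_weaken_one {R : Type u} [CommRing R] (n : ℕ) :
    ∀ (Z N : ModuleCat.{u} R), IsSyzygy R (n+1) Z N → ∃ N', IsSyzygy R n Z N' := by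
  induction n with
  | zero => exact fun Z N _ => ⟨Z, ⟨Iso.refl Z⟩⟩
  | succ n ih =>
    rintro Z N ⟨P, K, f, g, h1, h2, h3, h4, h5, hK⟩
    obtain ⟨N', hN'⟩ := ih K N hK
    exact ⟨N', P, K, f, g, h1, h2, h3, h4, h5, hN'⟩

lemma syzygy_weaken {R : Type u} [CommRing R] {m n : ℕ} (hmn : m ≤ n) (Z : ModuleCat.{u} R)
    (h : ∃ N, IsSyzygy R n Z N) : ∃ N, IsSyzygy R m Z N := by
  induction hmn with
  | refl => exact h
  | step _ ih =>
    obtain ⟨N, hN⟩ := h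
    exact ih (syzygy_weaken_one _ Z N hN)

lemma hom_to_syzygy_zero {R : Type u} [CommRing R] {X Z N : ModuleCat.{u} R}
    (hX : extZero R 0 X (ModuleCat.of R R)) (hZ : IsSyzygy R 1 Z N) (u : X →ₗ[R] Z) : u = 0 := by
  obtain ⟨P, K, f, g, h1, h2, h3, h4, h5, hK⟩ := hZ
  have hP : Module.Projective R P := (IsProjective.iff_projective P).2 h1
  have := zero_fg_proj hP (K := X) (fun w => by
    have := hom_zero_of_extZero hX (ModuleCat.ofHom w)
    rw [← ModuleCat.hom_ofHom w, this]; rfl) (f.hom.comp u)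
  ext x
  apply h3
  rw [LinearMap.zero_apply, map_zero]
  exact LinearMap.congr_fun this x

lemma extend_step {R : Type u} [CommRing R] {X : ModuleCat.{u} R} (n : ℕ)
    (hgrade : ∀ i ≤ n+1, extZero R i X (ModuleCat.of R R))
    (IH : ∀ (K Z N : ModuleCat.{u} R), IsSyzygy R n K X → IsSyzygy R (n+1) Z N →
      ∀ u : K →ₗ[R] Z, FactorsThroughProjective u)
    (K P L Z N : ModuleCat.{u} R) (f : K ⟶ P) (g : P ⟶ L)
    (hf : Function.Injective f) (hg : Function.Surjective g) (he : Function.Exact f g)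
    (hL : IsSyzygy R n L X) (hZ : IsSyzygy R (n+2) Z N) (u : K →ₗ[R] Z) :
    ∃ v : P →ₗ[R] Z, v.comp f.hom = u := by
  obtain ⟨Q, Z', a, b, h1, h2, h3, h4, h5, hZ'⟩ := hZ
  have hQ : Module.Projective R Q := (IsProjective.iff_projective Q).2 h1
  have hLR : Subsingleton (Abelian.Ext L (ModuleCat.of R R) 1) := by
    refine ext_syzygy n L hL 0 ?_
    have := ext_of_extZero (hgrade (n+1) le_rfl)
    rwa [show 0 + 1 + n = n + 1 by lia]
  obtain ⟨v, hv⟩ := extend_fg_proj hQ f.hom (fun w => by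
    obtain ⟨v, hv⟩ := ext_extend f g hf hg he hLR (ModuleCat.ofHom w)
    exact ⟨v.hom, by rw [← ModuleCat.hom_comp, hv]; rfl⟩) (a.hom.comp u)
  have hv' : ∀ x, v (f x) = a (u x) := fun x => LinearMap.congr_fun hv x
  have hker : LinearMap.ker g.hom ≤ LinearMap.ker (b.hom.comp v) := by
    intro x hx
    obtain ⟨y, rfl⟩ := (he x).1 hx
    change b (v (f y)) = 0
    rw [hv']
    exact h5.apply_apply_eq_zero _
  let eL := g.hom.quotKerEquivOfSurjective hg
  let w : L →ₗ[R] Z' := ((LinearMap.ker g.hom).liftQ (b.hom.comp v) hker).comp eL.symm.toLinearMap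
  have hw : ∀ x, w (g x) = b (v x) := by
    intro x
    have : eL.symm (g x) = Submodule.Quotient.mk x := by
      rw [LinearEquiv.symm_apply_eq]; rfl
    simp only [w, LinearMap.comp_apply, LinearEquiv.coe_coe, this]
    rfl
  obtain ⟨T, _, _, hT, s, t, hst⟩ := IH L Z' N hL hZ' w
  obtain ⟨t', ht'⟩ := Module.projective_lifting_property b.hom t h4
  let v' : P →ₗ[R] Q := v - t'.comp (s.comp g.hom)
  have hvb : ∀ x, ∃ z, a z = v' x := by
    intro x
    apply (h5 _).1
    have e1 : b (t' (s (g x))) = t (s (g x)) := LinearMap.congr_fun ht' _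
    have e2 : t (s (g x)) = w (g x) := LinearMap.congr_fun hst _
    change b (v x - t' (s (g x))) = 0
    rw [map_sub, e1, e2, hw, sub_self]
  have hr : ∀ x, v' x ∈ LinearMap.range a.hom := hvb
  let ea := LinearEquiv.ofInjective a.hom h3
  refine ⟨ea.symm.toLinearMap.comp (v'.codRestrict _ hr), ?_⟩
  ext x
  apply h3
  have e3 : ∀ y : LinearMap.range a.hom, a (ea.symm y) = y.1 := by
    intro y
    conv_rhs => rw [← ea.apply_symm_apply y]
    rfl
  change a (ea.symm _) = _
  rw [e3]
  change v (f x) - t' (s (g (f x))) = _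
  rw [hv', show g (f x) = 0 from he.apply_apply_eq_zero x, map_zero, map_zero, sub_zero]

lemma factor_lemma {R : Type u} [CommRing R] {X : ModuleCat.{u} R} (n : ℕ)
    (hgrade : ∀ i ≤ n, extZero R i X (ModuleCat.of R R)) :
    ∀ (K Z N : ModuleCat.{u} R), IsSyzygy R n K X → IsSyzygy R (n+1) Z N →
      ∀ u : K →ₗ[R] Z, FactorsThroughProjective u := by
  induction n with
  | zero =>
    rintro K Z N ⟨e⟩ hZ u
    have h0 := hom_to_syzygy_zero (hgrade 0 le_rfl) hZ (u.comp e.inv.hom)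
    have : u = 0 := by
      ext x
      have := LinearMap.congr_fun h0 (e.hom x)
      simpa using this
    refine ⟨PUnit, inferInstance, inferInstance, inferInstance, 0, 0, by rw [this]; simp⟩
  | succ n ih =>
    rintro K Z N ⟨P, L, f, g, hP, -, hf, hg, he, hL⟩ hZ u
    obtain ⟨v, hv⟩ := extend_step n hgrade (ih fun i hi => hgrade i (by lia)) K P L Z N f g
      hf hg he hL hZ u
    exact ⟨P, inferInstance, inferInstance, (IsProjective.iff_projective P).2 hP, f.hom, v, hv⟩

/-- Maps from `n`-th syzygies of `X` to `Z` extend along syzygy sequences. -/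
def GoodAt {R : Type u} [CommRing R] (X : ModuleCat.{u} R) (Z : Type u) [AddCommGroup Z]
    [Module R Z] : ℕ → Prop
  | 0 => ∀ u : X →ₗ[R] Z, u = 0
  | n+1 => ∀ (K P L : ModuleCat.{u} R) (f : K ⟶ P) (g : P ⟶ L),
    Function.Injective f → Function.Surjective g → Function.Exact f g →
    IsSyzygy R n L X → ∀ u : K →ₗ[R] Z, ∃ v : P →ₗ[R] Z, v.comp f.hom = u

lemma goodAt_syzygy {R : Type u} [CommRing R] {X Z : ModuleCat.{u} R} (n : ℕ)
    (hgrade : ∀ i ≤ n, extZero R i X (ModuleCat.of R R)) (hZ : ∃ N, IsSyzygy R (n+1) Z N) :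
    GoodAt X Z n := by
  obtain ⟨N, hZ⟩ := hZ
  cases n with
  | zero => exact hom_to_syzygy_zero (hgrade 0 le_rfl) hZ
  | succ n =>
    intro K P L f g hf hg he hL u
    exact extend_step n hgrade (factor_lemma n fun i hi => hgrade i (by lia)) K P L Z N f g
      hf hg he hL hZ u

lemma goodAt_prod {R : Type u} [CommRing R] {X : ModuleCat.{u} R} {Z Z' : Type u}
    [AddCommGroup Z] [Module R Z] [AddCommGroup Z'] [Module R Z'] (n : ℕ)
    (h : GoodAt X Z n) (h' : GoodAt X Z' n) : GoodAt X (Z × Z') n := by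
  cases n with
  | zero =>
    intro u
    ext x
    · exact LinearMap.congr_fun (h ((LinearMap.fst R Z Z').comp u)) x
    · exact LinearMap.congr_fun (h' ((LinearMap.snd R Z Z').comp u)) x
  | succ n =>
    intro K P L f g hf hg he hL u
    obtain ⟨v, hv⟩ := h K P L f g hf hg he hL ((LinearMap.fst R Z Z').comp u)
    obtain ⟨v', hv'⟩ := h' K P L f g hf hg he hL ((LinearMap.snd R Z Z').comp u)
    refine ⟨v.prod v', ?_⟩
    ext x
    · exact LinearMap.congr_fun hv x
    · exact LinearMap.congr_fun hv' x

/-- `P` is a direct summand of a finite sum of copies of `Z`. -/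
def RetrIn (R : Type u) [CommRing R] (Z P : Type u) [AddCommGroup Z] [AddCommGroup P] [Module R Z]
    [Module R P] : Prop :=
  ∃ (ι : Type) (_ : Fintype ι) (a : ι → (P →ₗ[R] Z)) (b : ι → (Z →ₗ[R] P)),
    ∀ x, ∑ j, b j (a j x) = x

lemma retrIn_of_gen {R : Type u} [CommRing R] {M : ModuleCat.{u} R}
    (hgen : MemAdd R M (ModuleCat.of R R)) (P : Type u) [AddCommGroup P] [Module R P]
    [Module.Finite R P] (hP : Module.Projective R P) : RetrIn R M P := by
  obtain ⟨k, iR, pR, hR⟩ := hgen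
  obtain ⟨n, i, p, hp⟩ := fg_proj_retract (R := R) P hP
  refine ⟨Fin n × Fin k, inferInstance,
    fun j => ((LinearMap.proj j.2).comp iR).comp ((LinearMap.proj j.1).comp i),
    fun j => (p.comp (LinearMap.single R (fun _ => R) j.1)).comp
      (pR.comp (LinearMap.single R (fun _ => M) j.2)), fun x => ?_⟩
  rw [Fintype.sum_prod_type]
  simp only [LinearMap.comp_apply]
  simp_rw [← map_sum]
  have h1 : ∀ y : R, pR (∑ l, (LinearMap.single R (fun _ => (M : Type u)) l)
      ((LinearMap.proj l : _ →ₗ[R] M) (iR y))) = y := by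
    intro y
    have : (∑ l, (LinearMap.single R (fun _ => (M : Type u)) l)
      ((LinearMap.proj l : _ →ₗ[R] M) (iR y))) = iR y := by
      ext l; simp [Finset.sum_apply, Pi.single_apply]
    rw [this]
    exact LinearMap.congr_fun hR y
  have h2 : (∑ l, (LinearMap.single R (fun _ => R) l)
      ((LinearMap.proj l : _ →ₗ[R] R) (i x))) = i x := by
    ext l; simp [Finset.sum_apply, Pi.single_apply]
  refine Eq.trans ?_ (LinearMap.congr_fun hp x)
  simp only [LinearMap.comp_apply]
  conv_rhs => rw [← h2]
  congr 1
  refine Finset.sum_congr rfl fun j _ => ?_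
  congr 1
  exact h1 _

lemma retrIn_prod {R : Type u} [CommRing R] {M P : Type u} (W : Type u) [AddCommGroup M] [AddCommGroup P]
    [AddCommGroup W] [Module R M] [Module R P] [Module R W] (h : RetrIn R M P) :
    RetrIn R (M × W) P := by
  obtain ⟨ι, _, a, b, hab⟩ := h
  exact ⟨ι, inferInstance, fun j => (LinearMap.inl R M W).comp (a j),
    fun j => (b j).comp (LinearMap.fst R M W), fun x => by simpa using hab x⟩

/-- Precomposition, linear over the endomorphism ring of the target. -/
def pre {R : Type u} [CommRing R] {N N' : Type u} (Z : Type u) [AddCommGroup N] [AddCommGroup N']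
    [AddCommGroup Z] [Module R N] [Module R N'] [Module R Z] (f : N →ₗ[R] N') :
    (N' →ₗ[R] Z) →ₗ[Module.End R Z] (N →ₗ[R] Z) where
  toFun u := u.comp f
  map_add' _ _ := rfl
  map_smul' _ _ := rfl

lemma proj_hom {R : Type u} [CommRing R] {Z P : Type u} [AddCommGroup Z] [AddCommGroup P]
    [Module R Z] [Module R P] (h : RetrIn R Z P) :
    Module.Projective (Module.End R Z) (P →ₗ[R] Z) := by
  obtain ⟨ι, _, a, b, hab⟩ := h
  let i : (P →ₗ[R] Z) →ₗ[Module.End R Z] (ι → Module.End R Z) :=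
    { toFun := fun u j => u.comp (b j)
      map_add' := fun _ _ => rfl
      map_smul' := fun _ _ => rfl }
  let s : (ι → Module.End R Z) →ₗ[Module.End R Z] (P →ₗ[R] Z) :=
    { toFun := fun g => ∑ j, (g j).comp (a j)
      map_add' := fun g g' => by
        simp only [Pi.add_apply, LinearMap.add_comp, Finset.sum_add_distrib]
      map_smul' := fun r g => by
        simp only [RingHom.id_apply, Finset.smul_sum]
        rfl }
  refine Module.Projective.of_split i s ?_
  ext u x
  change (∑ j, (u.comp (b j)).comp (a j)) x = u x
  rw [LinearMap.sum_apply]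
  simp only [LinearMap.comp_apply]
  rw [← map_sum, hab]

lemma pre_inj {R : Type u} [CommRing R] {N N' : Type u} (Z : Type u) [AddCommGroup N]
    [AddCommGroup N'] [AddCommGroup Z] [Module R N] [Module R N'] [Module R Z] (f : N →ₗ[R] N')
    (hf : Function.Surjective f) : Function.Injective (pre Z f) := by
  intro u v h
  ext x
  obtain ⟨y, rfl⟩ := hf x
  exact LinearMap.congr_fun h y

lemma pre_exact {R : Type u} [CommRing R] {K P L : Type u} (Z : Type u) [AddCommGroup K]
    [AddCommGroup P] [AddCommGroup L] [AddCommGroup Z] [Module R K] [Module R P] [Module R L]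
    [Module R Z] (f : K →ₗ[R] P) (g : P →ₗ[R] L) (hg : Function.Surjective g)
    (he : Function.Exact f g) : Function.Exact (pre Z g) (pre Z f) := by
  intro u
  constructor
  · intro hu
    have hker : LinearMap.ker g ≤ LinearMap.ker u := by
      intro x hx
      obtain ⟨y, rfl⟩ := (he x).1 hx
      exact LinearMap.congr_fun hu y
    let eL := g.quotKerEquivOfSurjective hg
    refine ⟨((LinearMap.ker g).liftQ u hker).comp eL.symm.toLinearMap, ?_⟩
    ext x
    have : eL.symm (g x) = Submodule.Quotient.mk x := by
      rw [LinearEquiv.symm_apply_eq]; rfl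
    change ((LinearMap.ker g).liftQ u hker) (eL.symm (g x)) = u x
    rw [this]
    rfl
  · rintro ⟨w, rfl⟩
    ext x
    change w (g (f x)) = 0
    rw [he.apply_apply_eq_zero, map_zero]

/-- Projective dimension of an unbundled module. -/
def PD (A : Type u) [Ring A] (V : Type u) [AddCommGroup V] [Module A V] (n : ℕ) : Prop :=
  HasProjectiveDimensionLT (ModuleCat.of A V) n

lemma PD_up {A : Type u} [Ring A] {V₁ V₂ V₃ : Type u} [AddCommGroup V₁] [AddCommGroup V₂]
    [AddCommGroup V₃] [Module A V₁] [Module A V₂] [Module A V₃] (f : V₁ →ₗ[A] V₂) (g : V₂ →ₗ[A] V₃)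
    (hf : Function.Injective f) (hg : Function.Surjective g) (he : Function.Exact f g)
    (h2 : Module.Projective A V₂) (n : ℕ) (h : PD A V₁ n) : PD A V₃ (n+1) := by
  obtain ⟨w, hS⟩ := mkSES (ModuleCat.ofHom f) (ModuleCat.ofHom g) hf hg he
  have : Projective (ModuleCat.of A V₂) := (IsProjective.iff_projective V₂).1 h2
  exact hS.hasProjectiveDimensionLT_X₃ n h
    (hasProjectiveDimensionLT_of_ge (ModuleCat.of A V₂) 1 _ (by lia))

lemma PD_down {A : Type u} [Ring A] {V₁ V₂ V₃ : Type u} [AddCommGroup V₁] [AddCommGroup V₂]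
    [AddCommGroup V₃] [Module A V₁] [Module A V₂] [Module A V₃] (f : V₁ →ₗ[A] V₂) (g : V₂ →ₗ[A] V₃)
    (hf : Function.Injective f) (hg : Function.Surjective g) (he : Function.Exact f g)
    (h2 : Module.Projective A V₂) (n : ℕ) (h : PD A V₃ (n+2)) : PD A V₁ (n+1) := by
  obtain ⟨w, hS⟩ := mkSES (ModuleCat.ofHom f) (ModuleCat.ofHom g) hf hg he
  exact (hS.hasProjectiveDimensionLT_X₃_iff n ((IsProjective.iff_projective V₂).1 h2)).1 h

lemma PD_proj {A : Type u} [Ring A] {V : Type u} [AddCommGroup V] [Module A V] :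
    PD A V 1 ↔ Module.Projective A V :=
  projective_iff_hasProjectiveDimensionLT_one.symm.trans (IsProjective.iff_projective V).symm

lemma PD_mono {A : Type u} [Ring A] {V : Type u} [AddCommGroup V] [Module A V] {m n : ℕ}
    (hmn : m ≤ n) (h : PD A V m) : PD A V n := by
  unfold PD at *
  exact hasProjectiveDimensionLT_of_ge _ m n hmn

lemma hom_pd {R : Type u} [CommRing R] {X : ModuleCat.{u} R} (Z : Type u) [AddCommGroup Z]
    [Module R Z]
    (hZ : ∀ (P : ModuleCat.{u} R), Module.Finite R P → Module.Projective R P → RetrIn R Z P)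
    (n : ℕ) (hgood : ∀ i ≤ n, GoodAt X Z i) : ∀ (K : ModuleCat.{u} R), IsSyzygy R n K X →
      PD (Module.End R Z) (K →ₗ[R] Z) n := by
  induction n with
  | zero =>
    rintro K ⟨e⟩
    have : Subsingleton (K →ₗ[R] Z) := by
      refine subsingleton_of_forall_eq 0 fun u => ?_
      have h0 := hgood 0 le_rfl (u.comp e.inv.hom)
      ext x
      have := LinearMap.congr_fun h0 (e.hom x)
      simpa using this
    exact (ModuleCat.isZero_of_subsingleton (ModuleCat.of (Module.End R Z) (K →ₗ[R] Z))
      ).hasProjectiveDimensionLT_zero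
  | succ n ih =>
    rintro K ⟨P, L, f, g, hP, hfin, hf, hg, he, hL⟩
    exact PD_up (pre Z g.hom) (pre Z f.hom) (pre_inj Z _ hg)
      (fun u => hgood (n+1) le_rfl K P L f g hf hg he hL u) (pre_exact Z _ _ hg he)
      (proj_hom (hZ P hfin ((IsProjective.iff_projective P).2 hP))) n
      (ih (fun i hi => hgood i (by lia)) L hL)

lemma split_surj {R : Type u} [CommRing R] {Z P P₀ : Type u} [AddCommGroup Z]
    [AddCommGroup P] [AddCommGroup P₀] [Module R Z] [Module R P] [Module R P₀]
    (hP : RetrIn R Z P) (hP₀ : RetrIn R Z P₀) (p : P →ₗ[R] P₀)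
    (r : (P →ₗ[R] Z) →ₗ[Module.End R Z] (P₀ →ₗ[R] Z)) (hr : ∀ α, r (α.comp p) = α) :
    Function.Surjective p := by
  obtain ⟨ι, _, a, b, hab⟩ := hP
  obtain ⟨κ, _, a', b', hab'⟩ := hP₀
  let s : P₀ →ₗ[R] P := ∑ j, (b j).comp (r (a j))
  have hs : ∀ x, s x = ∑ j, b j (r (a j) x) := fun x => by
    simp [s, LinearMap.sum_apply]
  have key : ∀ (α : P₀ →ₗ[R] Z) x, α (p (s x)) = α x := by
    intro α x
    have h1 : α.comp p = ∑ j, (show Module.End R Z from (α.comp p).comp (b j)) • a j := by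
      ext y
      rw [LinearMap.sum_apply]
      conv_lhs => rw [← hab y, map_sum]
      rfl
    have h2 := hr α
    rw [h1, map_sum] at h2
    simp only [map_smul] at h2
    rw [hs, map_sum, map_sum]
    conv_rhs => rw [← h2, LinearMap.sum_apply]
    rfl
  intro x
  refine ⟨s x, ?_⟩
  rw [← hab' (p (s x))]
  conv_rhs => rw [← hab' x]
  simp only [key]

lemma top_lemma {R : Type u} [CommRing R] {X : ModuleCat.{u} R} (Z : Type u) [AddCommGroup Z]
    [Module R Z]
    (hZ : ∀ (P : ModuleCat.{u} R), Module.Finite R P → Module.Projective R P → RetrIn R Z P)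
    (n : ℕ) (hgood : ∀ i ≤ n+1, GoodAt X Z i) :
    ∀ (K P : ModuleCat.{u} R), IsSyzygy R (n+1) K X → Module.Finite R P → Module.Projective R P →
      ∀ (p : P →ₗ[R] K), Function.Surjective p → ∀ (C : Type u) [AddCommGroup C]
      [Module (Module.End R Z) C] (q : (P →ₗ[R] Z) →ₗ[Module.End R Z] C), Function.Surjective q →
      Function.Exact (pre Z p) q → PD (Module.End R Z) C (n+1) → Subsingleton X := by
  induction n with
  | zero =>
    rintro K P ⟨P₀, L, f, g, hP₀, hfin, hf, hg, he, ⟨e⟩⟩ hPf hPp p hp C _ _ q hq heq hC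
    have hC' : Module.Projective (Module.End R Z) C := PD_proj.1 hC
    have hP₀' : Module.Projective R P₀ := (IsProjective.iff_projective P₀).2 hP₀
    have hL0 : Subsingleton (L →ₗ[R] Z) := by
      refine subsingleton_of_forall_eq 0 fun u => ?_
      have h0 := hgood 0 (by lia) (u.comp e.inv.hom)
      ext x
      have := LinearMap.congr_fun h0 (e.hom x)
      simpa using this
    have hinj : Function.Injective (pre Z f.hom) := by
      rw [injective_iff_map_eq_zero]
      intro u hu
      obtain ⟨w, rfl⟩ := (pre_exact Z f.hom g.hom hg he u).1 hu
      rw [Subsingleton.elim w 0, map_zero]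
    have hsur : Function.Surjective (pre Z f.hom) :=
      fun u => hgood 1 (by lia) K P₀ L f g hf hg he ⟨e⟩ u
    have hm : pre Z (f.hom.comp p) = (pre Z p).comp (pre Z f.hom) := rfl
    have hexact : Function.Exact (pre Z (f.hom.comp p)) q := by
      intro u
      rw [heq u, hm]
      constructor
      · rintro ⟨w, rfl⟩
        obtain ⟨w', rfl⟩ := hsur w
        exact ⟨w', rfl⟩
      · rintro ⟨w, rfl⟩
        exact ⟨_, rfl⟩
    have hinj' : Function.Injective (pre Z (f.hom.comp p)) := by
      rw [hm]
      exact (pre_inj Z p hp).comp hinj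
    obtain ⟨l, hl⟩ := Module.projective_lifting_property q LinearMap.id hq
    have htf := hexact.split_tfae'.out 0 1
    obtain ⟨-, r, hr⟩ := htf.1 ⟨hinj', l, hl⟩
    have hs := split_surj (hZ P hPf hPp) (hZ P₀ hfin hP₀') (f.hom.comp p) r
      (fun α => LinearMap.congr_fun hr α)
    have : ∀ y : L, y = 0 := by
      intro y
      obtain ⟨x, rfl⟩ := hg y
      obtain ⟨z, rfl⟩ := hs x
      exact he.apply_apply_eq_zero (p z)
    refine subsingleton_of_forall_eq 0 fun x => ?_
    have h1 : e.hom (e.inv x) = x := by simp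
    rw [← h1, this (e.inv x), map_zero]
  | succ n ih =>
    rintro K P ⟨P₀, L, f, g, hP₀, hfin, hf, hg, he, hL⟩ hPf hPp p hp C _ _ q hq heq hC
    refine ih (fun i hi => hgood i (by lia)) L P₀ hL hfin ((IsProjective.iff_projective P₀).2 hP₀)
      g.hom hg (K →ₗ[R] Z) (pre Z f.hom)
      (fun u => hgood (n+2) le_rfl K P₀ L f g hf hg he hL u)
      (pre_exact Z _ _ hg he) ?_
    exact PD_down (pre Z p) q (pre_inj Z p hp) hq heq (proj_hom (hZ P hPf hPp)) n hC

lemma syzygy_zero {R : Type u} [CommRing R] {X : ModuleCat.{u} R} (hX : Subsingleton X) (n : ℕ) :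
    ∀ (K : ModuleCat.{u} R), IsSyzygy R n K X → Module.Projective R K ∧ Module.Finite R K := by
  induction n with
  | zero =>
    rintro K ⟨e⟩
    have : Subsingleton K := e.toLinearEquiv.toEquiv.subsingleton
    exact ⟨inferInstance, inferInstance⟩
  | succ n ih =>
    rintro K ⟨P₀, L, f, g, hP₀, hfin, hf, hg, he, hL⟩
    have := (ih L hL).1
    have hP₀' : Module.Projective R P₀ := (IsProjective.iff_projective P₀).2 hP₀
    obtain ⟨l, hl⟩ := Module.projective_lifting_property g.hom LinearMap.id hg
    have htf := (show Function.Exact f.hom g.hom from he).split_tfae'.out 0 1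
    obtain ⟨-, r, hr⟩ := htf.1 ⟨hf, l, hl⟩
    refine ⟨Module.Projective.of_split f.hom r hr, Module.Finite.of_surjective r fun x => ?_⟩
    exact ⟨f.hom x, LinearMap.congr_fun hr x⟩

lemma syzygy_finite {R : Type u} [CommRing R] [IsNoetherianRing R] {X : ModuleCat.{u} R}
    [Module.Finite R X] (n : ℕ) :
    ∀ (K : ModuleCat.{u} R), IsSyzygy R n K X → Module.Finite R K := by
  cases n with
  | zero =>
    rintro K ⟨e⟩
    exact Module.Finite.equiv e.toLinearEquiv.symm
  | succ n =>
    rintro K ⟨P₀, L, f, g, hP₀, hfin, hf, hg, he, hL⟩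
    exact Module.Finite.of_injective f.hom hf

section
variable (R : Type u) [CommRing R] (M W : Type u) [AddCommGroup M] [AddCommGroup W] [Module R M]
  [Module R W]

/-- The ideal `AeA`. -/
abbrev idl : TwoSidedIdeal (Module.End R (M × W)) :=
  TwoSidedIdeal.span ({(LinearMap.inl R M W).comp (LinearMap.fst R M W)} :
            Set (Module.End R (M × W)))

lemma retrIn_snd : RetrIn R (M × W) W :=
  ⟨Unit, inferInstance, fun _ => LinearMap.inr R M W, fun _ => LinearMap.snd R M W,
    fun x => by simp⟩

/-- The surjection from `Hom(W, M ⊕ W)` to `A/AeA`. -/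
def phi : letI := quotSpanModule _ (idl R M W)
    (W →ₗ[R] (M × W)) →ₗ[Module.End R (M × W)] (idl R M W).ringCon.Quotient :=
  letI := quotSpanModule _ (idl R M W)
  { toFun := fun h => (idl R M W).ringCon.mk' (show Module.End R (M × W) from
      h.comp (LinearMap.snd R M W))
    map_add' := fun h h' => by
      rw [← map_add]; rfl
    map_smul' := fun r h => by
      change _ = (idl R M W).ringCon.mk' r * _
      rw [← map_mul]; rfl }

variable {R M W}

lemma mk_zero_iff (x : Module.End R (M × W)) :
    (idl R M W).ringCon.mk' x = 0 ↔ x ∈ idl R M W := by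
  rw [TwoSidedIdeal.mem_iff]
  exact RingCon.eq _

lemma phi_zero {h : W →ₗ[R] (M × W)} :
    phi R M W h = 0 ↔ (show Module.End R (M × W) from h.comp (LinearMap.snd R M W)) ∈ idl R M W :=
  mk_zero_iff _

lemma e_mem (t : Module.End R (M × W)) (s : Module.End R (M × W)) :
    t * ((LinearMap.inl R M W).comp (LinearMap.fst R M W) : Module.End R (M × W)) * s
      ∈ idl R M W :=
  (idl R M W).mul_mem_right _ _ ((idl R M W).mul_mem_left _ _
    (TwoSidedIdeal.subset_span (Set.mem_singleton _)))

lemma phi_surj : Function.Surjective (phi R M W) := by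
  intro x
  obtain ⟨y, rfl⟩ := (idl R M W).ringCon.mk'_surjective x
  refine ⟨y.comp (LinearMap.inr R M W), ?_⟩
  change (idl R M W).ringCon.mk' _ = _
  rw [← sub_eq_zero, ← map_sub, mk_zero_iff]
  have := (idl R M W).neg_mem (e_mem y 1)
  convert this using 1
  apply LinearMap.ext
  rintro ⟨m, w⟩
  change y (0, w) - y (m, w) = - y (m, 0)
  rw [← map_sub, ← map_neg]
  simp

lemma mem_span_of_retr {P : Type u} [AddCommGroup P] [Module R P] (hP : RetrIn R M P)
    (f : W →ₗ[R] P) (v : P →ₗ[R] (M × W)) :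
    (show Module.End R (M × W) from (v.comp f).comp (LinearMap.snd R M W)) ∈ idl R M W := by
  obtain ⟨ι, _, a, b, hab⟩ := hP
  have : (show Module.End R (M × W) from (v.comp f).comp (LinearMap.snd R M W)) =
      ∑ j, (show Module.End R (M × W) from (v.comp (b j)).comp (LinearMap.fst R M W)) *
        ((LinearMap.inl R M W).comp (LinearMap.fst R M W) : Module.End R (M × W)) *
        (show Module.End R (M × W) from
          (LinearMap.inl R M W).comp (((a j).comp f).comp (LinearMap.snd R M W))) := by
    apply LinearMap.ext
    rintro ⟨m, w⟩
    rw [LinearMap.sum_apply]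
    change v (f w) = ∑ j, v (b j (a j (f w)))
    rw [← map_sum, hab]
  rw [this]
  exact sum_mem fun j _ => e_mem _ _

open scoped Pointwise in
lemma span_sub {x : Module.End R (M × W)} (hx : x ∈ idl R M W) (S : AddSubgroup (W →ₗ[R] (M × W)))
    (hS : ∀ (t : M →ₗ[R] (M × W)) (u : W →ₗ[R] M), t.comp u ∈ S) :
    x.comp (LinearMap.inr R M W) ∈ S := by
  rw [TwoSidedIdeal.mem_span_iff_mem_addSubgroup_closure] at hx
  induction hx using AddSubgroup.closure_induction with
  | mem x hx =>
    obtain ⟨_, ⟨t, -, _, rfl, rfl⟩, s, -, rfl⟩ := hx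
    exact hS (t.comp (LinearMap.inl R M W))
      ((LinearMap.fst R M W).comp (s.comp (LinearMap.inr R M W)))
  | zero => rw [LinearMap.zero_comp]; exact S.zero_mem
  | add x y _ _ hx hy => rw [LinearMap.add_comp]; exact S.add_mem hx hy
  | neg x _ hx => rw [LinearMap.neg_comp]; exact S.neg_mem hx

end

/-- With `A = End_R(M ⊕ Ω^c X)` and `e` the idempotent projecting onto `M`,
the projective dimension of the left `A`-module `A/AeA` is at most `gldim End_R(M)`. -/
theorem stmt10 (R : Type u) [CommRing R] [IsNoetherianRing R] (d c : ℕ) (hcd : c < d)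
    (M X : ModuleCat.{u} R) [Module.Finite R M] [Module.Finite R X]
    (hM : IsTorsionFree R d M)
    (hgen : MemAdd R M (ModuleCat.of R R))
    (hgrade : ∀ i ≤ c, extZero R i X (ModuleCat.of R R))
    (W : ModuleCat.{u} R) (hW : IsSyzygy R c W X)
    (a : ℕ) (ha : gldimLE (Module.End R M) a) :
    pdLE (Module.End R (M × W)) a
      (@ModuleCat.of (Module.End R (M × W)) _
        (TwoSidedIdeal.span
          ({(LinearMap.inl R M W).comp (LinearMap.fst R M W)} :
            Set (Module.End R (M × W)))).ringCon.Quotient _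
        (quotSpanModule _ _)) := by
  classical
  have hret : ∀ (P : ModuleCat.{u} R), Module.Finite R P → Module.Projective R P →
      RetrIn R M P := fun P _ hP => retrIn_of_gen hgen P hP
  have hret' : ∀ (P : ModuleCat.{u} R), Module.Finite R P → Module.Projective R P →
      RetrIn R (M × W) P := fun P h hP => retrIn_prod W (hret P h hP)
  have hM' : ∃ N, IsSyzygy R d M N := by
    obtain ⟨N, -, -, h⟩ := hM
    exact ⟨N, h⟩
  have hgoodM : ∀ i ≤ c, GoodAt X M i := fun i hi =>
    goodAt_syzygy i (fun j hj => hgrade j (by lia)) (syzygy_weaken (by lia) M hM')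
  have hgoodZ : ∀ i < c, GoodAt X (M × W) i := fun i hi =>
    goodAt_prod i (hgoodM i (by lia)) (goodAt_syzygy i (fun j hj => hgrade j (by lia))
      (syzygy_weaken (by lia) W ⟨X, hW⟩))
  rw [pdLE_iff]
  letI : Module (Module.End R (M × W)) (TwoSidedIdeal.span
          ({(LinearMap.inl R M W).comp (LinearMap.fst R M W)} :
            Set (Module.End R (M × W)))).ringCon.Quotient := quotSpanModule _ _
  change PD (Module.End R (M × W)) _ (a+1)
  by_cases hca : c ≤ a
  · refine PD_mono (show c + 1 ≤ a + 1 by lia) ?_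
    cases c with
    | zero =>
      obtain ⟨e⟩ := hW
      have hWM : ∀ u : W →ₗ[R] M, u = 0 := by
        intro u
        have h0 := hgoodM 0 le_rfl (u.comp e.inv.hom)
        ext x
        have := LinearMap.congr_fun h0 (e.hom x)
        simpa using this
      have hinj : Function.Injective (phi R M W) := by
        rw [injective_iff_map_eq_zero]
        intro h hh
        have := span_sub (phi_zero.1 hh) ⊥ (fun t u => by rw [hWM u]; simp)
        rw [LinearMap.comp_assoc, LinearMap.snd_comp_inr, LinearMap.comp_id] at this
        exact this
      have hproj : Module.Projective (Module.End R (M × W)) (W →ₗ[R] (M × W)) :=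
        proj_hom (retrIn_snd R M W)
      exact PD_proj.2 (Module.Projective.of_equiv
        (LinearEquiv.ofBijective (phi R M W) ⟨hinj, phi_surj⟩))
    | succ n =>
      obtain ⟨P, L, f, g, hP, hfin, hf, hg, he, hL⟩ := hW
      have hP' : Module.Projective R P := (IsProjective.iff_projective P).2 hP
      have h1 := hom_pd (M × W) hret' n (fun i hi => hgoodZ i (by lia)) L hL
      have h2 : PD (Module.End R (M × W)) (LinearMap.range (pre (M × W) f.hom)) (n+1) := by
        refine PD_up (pre (M × W) g.hom) (pre (M × W) f.hom).rangeRestrict (pre_inj _ _ hg)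
          (LinearMap.surjective_rangeRestrict _) ?_ (proj_hom (hret' P hfin hP')) n h1
        intro u
        rw [← pre_exact (M × W) f.hom g.hom hg he u]
        exact Subtype.ext_iff
      refine PD_up (LinearMap.range (pre (M × W) f.hom)).subtype (phi R M W)
        Subtype.val_injective phi_surj ?_ (proj_hom (retrIn_snd R M W)) (n+1) h2
      intro h
      rw [phi_zero]
      constructor
      · intro hh
        have := span_sub hh (LinearMap.range (pre (M × W) f.hom)).toAddSubgroup (fun t u => by
          obtain ⟨v, rfl⟩ := hgoodM (n+1) le_rfl W P L f g hf hg he hL u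
          exact ⟨t.comp v, rfl⟩)
        rw [LinearMap.comp_assoc, LinearMap.snd_comp_inr, LinearMap.comp_id] at this
        exact ⟨⟨h, this⟩, rfl⟩
      · rintro ⟨⟨_, v, rfl⟩, rfl⟩
        exact mem_span_of_retr (hret P hfin hP') f.hom v
  · have hX : Subsingleton X := by
      obtain ⟨n, rfl⟩ : ∃ n, c = n + 1 := ⟨c - 1, by lia⟩
      have hWf : Module.Finite R W := syzygy_finite _ W hW
      obtain ⟨k, p, hp⟩ := Module.Finite.exists_fin' R W
      let P : ModuleCat.{u} R := ModuleCat.of R (Fin k → R)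
      let p' : P →ₗ[R] W := p
      refine top_lemma M hret n hgoodM W P hW (inferInstanceAs (Module.Finite R (Fin k → R)))
        (inferInstanceAs (Module.Projective R (Fin k → R))) p' hp
        ((P →ₗ[R] M) ⧸ LinearMap.range (pre M p')) (LinearMap.range (pre M p')).mkQ
        (Submodule.mkQ_surjective _) (LinearMap.exact_map_mkQ_range _) ?_
      refine PD_mono (show a + 1 ≤ n + 1 by lia) ?_
      exact (pdLE_iff a _).1 (ha (ModuleCat.of _ ((P →ₗ[R] M) ⧸ LinearMap.range (pre M p'))))
    obtain ⟨hWp, hWf⟩ := syzygy_zero hX c W hW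
    refine PD_mono (show 0 ≤ a + 1 by lia) ?_
    have : Subsingleton (TwoSidedIdeal.span
          ({(LinearMap.inl R M W).comp (LinearMap.fst R M W)} :
            Set (Module.End R (M × W)))).ringCon.Quotient := by
      refine subsingleton_of_forall_eq 0 fun x => ?_
      obtain ⟨h, rfl⟩ := phi_surj x
      exact phi_zero.2 (mem_span_of_retr (hret W hWf hWp) LinearMap.id h)
    exact (ModuleCat.isZero_of_subsingleton (ModuleCat.of (Module.End R (M × W)) _)
      ).hasProjectiveDimensionLT_zero
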